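/- arXiv:1802.00681 — 5 statements merged into one kernel-verified Lean document; each statement's English description precedes it below -/
import Mathlib

section
/- Let T : D → D be a (λ,ρ)-firmly nonexpansive mapping for some λ ∈ (0,1), let w ∈ D be a fixed point of T, and let (f_n), (g_n) be generated by the iterative process g_n = (1−α_n) f_n + α_n T f_n, f_{n+1} = T g_n with (α_n) ⊂ (0,1) and f_1 ∈ D. Then for every n, ρ(f_{n+1} − w) ≤ ρ(g_n − w) ≤ ρ(f_n − w); in particular the sequence (ρ(f_n − w)) is nonincreasing. -/
/-!
If `T` is firmly nonexpansive and `T w = w`, then `ρ (T x - w)` is at most the value of `ρ` at a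
convex combination of `x - w` and `T x - w` with positive weight on `x - w`; convexity of `ρ` then
forces `ρ (T x - w) ≤ ρ (x - w)`. So `φ x = ρ (x - w)` does not increase under `T`: `f n` and
`T (f n)` lie in the convex sublevel set of `φ` at height `φ (f n)`, hence so does `g n`, and one
more application of `T` does not increase `φ`.
-/

open Set

section

variable {𝕜 E β : Type*} [Ring 𝕜] [PartialOrder 𝕜] [AddCommGroup E] [Module 𝕜 E]

/-- `T` is `(lam, ρ)`-firmly nonexpansive on `D`. The range of `lam` and the invariance of `D`
under `T` are not part of the definition. -/
def IsFirmlyNonexpansiveOn [LE β] (lam : 𝕜) (ρ : E → β) (T : E → E) (D : Set E) : Prop :=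
  ∀ x ∈ D, ∀ y ∈ D, ρ (T x - T y) ≤ ρ ((1 - lam) • (x - y) + lam • (T x - T y))

theorem IsFirmlyNonexpansiveOn.map_sub_le [IsOrderedRing 𝕜] [AddCommMonoid β] [LinearOrder β]
    [IsOrderedCancelAddMonoid β] [Module 𝕜 β] [PosSMulStrictMono 𝕜 β] {lam : 𝕜} {ρ : E → β}
    {T : E → E} {D : Set E} {w x : E} (hT : IsFirmlyNonexpansiveOn lam ρ T D)
    (hρ : ConvexOn 𝕜 univ ρ) (hlam : lam ∈ Ico 0 1) (hwD : w ∈ D) (hw : T w = w) (hx : x ∈ D) :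
    ρ (T x - w) ≤ ρ (x - w) := by
  have hfirm : ρ (T x - w) ≤ ρ ((1 - lam) • (x - w) + lam • (T x - w)) := by
    simpa only [hw] using hT x hx w hwD
  exact hfirm.trans <| hρ.le_left_of_right_le' (mem_univ _) (mem_univ _) (sub_pos.2 hlam.2)
    hlam.1 (sub_add_cancel 1 lam) hfirm

/-- The Picard–Mann hybrid iteration of `T` with weights `α`: a Mann averaging step from `f n` to
`g n`, followed by a Picard step from `g n` to `f (n + 1)`. Indexing starts at `0`, and the weights
may take the endpoint values `0` and `1`. -/
structure IsPicardMannIteration (T : E → E) (α : ℕ → 𝕜) (f g : ℕ → E) : Prop where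
  weight_mem : ∀ n, α n ∈ Icc 0 1
  mann_step : ∀ n, g n = (1 - α n) • f n + α n • T (f n)
  picard_step : ∀ n, f (n + 1) = T (g n)

namespace IsPicardMannIteration

variable [IsOrderedRing 𝕜] [Preorder β] {T : E → E} {α : ℕ → 𝕜} {f g : ℕ → E} {D : Set E}
  {φ : E → β}

theorem mann_mem_sublevel (h : IsPicardMannIteration T α f g) (hφ : QuasiconvexOn 𝕜 D φ)
    (hT : MapsTo T D D) (hφT : ∀ x ∈ D, φ (T x) ≤ φ x) {n : ℕ} (hn : f n ∈ D) :
    g n ∈ {x ∈ D | φ x ≤ φ (f n)} := by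
  rw [h.mann_step]
  exact hφ (φ (f n)) ⟨hn, le_rfl⟩ ⟨hT hn, hφT _ hn⟩ (sub_nonneg.2 (h.weight_mem n).2)
    (h.weight_mem n).1 (sub_add_cancel 1 (α n))

theorem picard_mem (h : IsPicardMannIteration T α f g) (hφ : QuasiconvexOn 𝕜 D φ)
    (hT : MapsTo T D D) (hφT : ∀ x ∈ D, φ (T x) ≤ φ x) (hf₀ : f 0 ∈ D) (n : ℕ) : f n ∈ D := by
  induction n with
  | zero => exact hf₀
  | succ n ih =>
    rw [h.picard_step]
    exact hT (h.mann_mem_sublevel hφ hT hφT ih).1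

theorem picard_succ_le_mann_le_picard (h : IsPicardMannIteration T α f g)
    (hφ : QuasiconvexOn 𝕜 D φ) (hT : MapsTo T D D) (hφT : ∀ x ∈ D, φ (T x) ≤ φ x)
    (hf₀ : f 0 ∈ D) (n : ℕ) : φ (f (n + 1)) ≤ φ (g n) ∧ φ (g n) ≤ φ (f n) := by
  obtain ⟨hgD, hgf⟩ := h.mann_mem_sublevel hφ hT hφT (h.picard_mem hφ hT hφT hf₀ n)
  exact ⟨h.picard_step n ▸ hφT _ hgD, hgf⟩

end IsPicardMannIteration

theorem stmt_1_general [IsOrderedRing 𝕜] [AddCommMonoid β] [LinearOrder β]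
    [IsOrderedCancelAddMonoid β] [Module 𝕜 β] [PosSMulStrictMono 𝕜 β] {ρ : E → β}
    (hρ : ConvexOn 𝕜 univ ρ) {D : Set E} (hD : Convex 𝕜 D) {T : E → E} (hT : MapsTo T D D)
    {lam : 𝕜} (hlam : lam ∈ Ico 0 1) (hfirm : IsFirmlyNonexpansiveOn lam ρ T D)
    {w : E} (hwD : w ∈ D) (hw : T w = w) {α : ℕ → 𝕜} {f g : ℕ → E} (hf₀ : f 0 ∈ D)
    (h : IsPicardMannIteration T α f g) :
    (∀ n, ρ (f (n + 1) - w) ≤ ρ (g n - w) ∧ ρ (g n - w) ≤ ρ (f n - w)) ∧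
      Antitone (fun n => ρ (f n - w)) := by
  have hφ : ConvexOn 𝕜 univ (fun x => ρ (x - w)) := by
    simpa only [sub_eq_add_neg, Function.comp_def, preimage_univ] using hρ.translate_left (-w)
  have hsteps := h.picard_succ_le_mann_le_picard (hφ.subset (subset_univ D) hD).quasiconvexOn hT
    (fun x hx => hfirm.map_sub_le hρ hlam hwD hw hx) hf₀
  exact ⟨hsteps, antitone_nat_of_succ_le fun n => (hsteps n).1.trans (hsteps n).2⟩

end

/-- Along the iterative process, ρ(f_{n+1} − w) ≤ ρ(g_n − w) ≤ ρ(f_n − w)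
for any fixed point w; in particular (ρ(f_n − w)) is nonincreasing. -/
theorem stmt_1
    {V : Type*} [AddCommGroup V] [Module ℝ V]
    (ρ : V → ℝ)
    (hnonneg : ∀ f : V, 0 ≤ ρ f)
    (heven : ∀ f : V, ρ (-f) = ρ f)
    (hconv : ∀ f g : V, ∀ α β : ℝ, 0 ≤ α → 0 ≤ β → α + β = 1 →
      ρ (α • f + β • g) ≤ α * ρ f + β * ρ g)
    (D : Set V) (hDne : D.Nonempty) (hDconv : Convex ℝ D)
    (T : V → V) (hTmaps : ∀ f ∈ D, T f ∈ D)
    (lam : ℝ) (hlam : lam ∈ Set.Ioo (0 : ℝ) 1)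
    (hfirm : ∀ f ∈ D, ∀ g ∈ D,
      ρ (T f - T g) ≤ ρ ((1 - lam) • (f - g) + lam • (T f - T g)))
    (w : V) (hwD : w ∈ D) (hw : T w = w)
    (α : ℕ → ℝ) (hα : ∀ n, α n ∈ Set.Ioo (0 : ℝ) 1)
    (f g : ℕ → V) (hf0 : f 0 ∈ D)
    (hg : ∀ n, g n = (1 - α n) • f n + (α n) • T (f n))
    (hfrec : ∀ n, f (n + 1) = T (g n)) :
    (∀ n, ρ (f (n + 1) - w) ≤ ρ (g n - w) ∧ ρ (g n - w) ≤ ρ (f n - w)) ∧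
      Antitone (fun n => ρ (f n - w)) := by
  have hρ : ConvexOn ℝ univ ρ :=
    ⟨convex_univ, fun x _ y _ a b ha hb hab => hconv x y a b ha hb hab⟩
  exact stmt_1_general hρ hDconv hTmaps (Ioo_subset_Ico_self hlam) hfirm hwD hw hf0
    ⟨fun n => Ioo_subset_Icc_self (hα n), hg, hfrec⟩
end

section
/- Let T : D → D be a (λ,ρ)-firmly nonexpansive mapping for some λ ∈ (0,1), let w ∈ D be a fixed point of T, and let (f_n) be generated by the iterative process g_n = (1−α_n) f_n + α_n T f_n, f_{n+1} = T g_n with (α_n) ⊂ (0,1) and f_1 ∈ D. Then the limit lim_{n→∞} ρ(f_n − w) exists (the real sequence (ρ(f_n − w)) converges). -/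
open Filter

/-!
Let `C` be a sublevel set in `D` of `x ↦ ρ (x - w)`. It is convex because `ρ` is, and `T` maps it
into itself because firm nonexpansiveness and convexity force `ρ (T x - w) ≤ ρ (x - w)`. Hence each
step of the iteration maps `C` into itself. Applied to the sublevel set at the level of the current
iterate, this says that `ρ (f n - w)` is nonincreasing, and it is bounded below by `0`.
-/

section PicardMann

variable {𝕜 V : Type*} [Ring 𝕜] [AddCommGroup V] [Module 𝕜 V]

/-- One step `f_n ↦ f_{n+1}` of the iterative process, with parameter `a` in the role of `α_n`: a
Mann averaging step followed by an application of `T` (the Picard–Mann hybrid iteration). -/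
def picardMannStep (T : V → V) (a : 𝕜) (x : V) : V :=
  T ((1 - a) • x + a • T x)

variable [PartialOrder 𝕜] [IsOrderedAddMonoid 𝕜] {T : V → V}

theorem mapsTo_picardMannStep {C : Set V} (hC : Convex 𝕜 C) (hT : Set.MapsTo T C C)
    {a : 𝕜} (ha : a ∈ Set.Icc 0 1) : Set.MapsTo (picardMannStep T a) C C :=
  fun _ hx => hT (hC hx (hT hx) (sub_nonneg.2 ha.2) ha.1 (sub_add_cancel 1 a))

variable {β : Type*} [Preorder β] {φ : V → β} {D : Set V}

theorem mapsTo_picardMannStep_sublevel (hφ : QuasiconvexOn 𝕜 D φ) (hT : Set.MapsTo T D D)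
    (hφT : ∀ x ∈ D, φ (T x) ≤ φ x) {a : 𝕜} (ha : a ∈ Set.Icc 0 1) (r : β) :
    Set.MapsTo (picardMannStep T a) {x ∈ D | φ x ≤ r} {x ∈ D | φ x ≤ r} :=
  mapsTo_picardMannStep (hφ r) (fun x hx => ⟨hT hx.1, (hφT x hx.1).trans hx.2⟩) ha

variable {α : ℕ → 𝕜} {f : ℕ → V}

theorem picardMann_mem_and_antitone (hφ : QuasiconvexOn 𝕜 D φ) (hT : Set.MapsTo T D D)
    (hφT : ∀ x ∈ D, φ (T x) ≤ φ x) (hα : ∀ n, α n ∈ Set.Icc 0 1) (hf0 : f 0 ∈ D)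
    (hf : ∀ n, f (n + 1) = picardMannStep T (α n) (f n)) :
    (∀ n, f n ∈ D) ∧ Antitone fun n => φ (f n) := by
  have succ_mem_sublevel (n : ℕ) (hn : f n ∈ D) : f (n + 1) ∈ {x ∈ D | φ x ≤ φ (f n)} :=
    hf n ▸ mapsTo_picardMannStep_sublevel hφ hT hφT (hα n) (φ (f n)) ⟨hn, le_rfl⟩
  have mem (n : ℕ) : f n ∈ D := by
    induction n with
    | zero => exact hf0
    | succ n hn => exact (succ_mem_sublevel n hn).1
  exact ⟨mem, antitone_nat_of_succ_le fun n => (succ_mem_sublevel n (mem n)).2⟩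

end PicardMann

section FirmlyNonexpansive

variable {V : Type*} [AddCommGroup V] [Module ℝ V] {ρ : V → ℝ} {lam : ℝ} {T : V → V} {D : Set V}

/-- `(lam, ρ)`-firm nonexpansiveness of `T` on `D`. The map `T` is total on `V`; only its values on
`D` matter. -/
def FirmlyNonexpansiveOn (lam : ℝ) (ρ : V → ℝ) (T : V → V) (D : Set V) : Prop :=
  ∀ x ∈ D, ∀ y ∈ D, ρ (T x - T y) ≤ ρ ((1 - lam) • (x - y) + lam • (T x - T y))

theorem FirmlyNonexpansiveOn.map_sub_map_le (hT : FirmlyNonexpansiveOn lam ρ T D)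
    (hρ : ConvexOn ℝ Set.univ ρ) (hlam : lam ∈ Set.Ico 0 1) {x y : V} (hx : x ∈ D) (hy : y ∈ D) :
    ρ (T x - T y) ≤ ρ (x - y) :=
  (hT x hx y hy).trans <| hρ.le_left_of_right_le' (Set.mem_univ _) (Set.mem_univ _)
    (sub_pos.2 hlam.2) hlam.1 (sub_add_cancel 1 lam) (hT x hx y hy)

theorem quasiconvexOn_comp_sub_right (hρ : ConvexOn ℝ Set.univ ρ) (hD : Convex ℝ D) (w : V) :
    QuasiconvexOn ℝ D fun x => ρ (x - w) := by
  have hconv : ConvexOn ℝ Set.univ fun x => ρ (x - w) := by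
    simpa only [sub_eq_add_neg, Set.preimage_univ, Function.comp_def] using hρ.translate_left (-w)
  exact (hconv.subset (Set.subset_univ D) hD).quasiconvexOn

end FirmlyNonexpansive

theorem stmt_2_general {V : Type*} [AddCommGroup V] [Module ℝ V] {φ : V → ℝ} {D : Set V}
    {T : V → V} (hφ : QuasiconvexOn ℝ D φ) (hbdd : BddBelow (φ '' D)) (hT : Set.MapsTo T D D)
    (hφT : ∀ x ∈ D, φ (T x) ≤ φ x) {α : ℕ → ℝ} (hα : ∀ n, α n ∈ Set.Icc 0 1)
    {f : ℕ → V} (hf0 : f 0 ∈ D) (hf : ∀ n, f (n + 1) = picardMannStep T (α n) (f n)) :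
    ∃ m : ℝ, Tendsto (fun n => φ (f n)) atTop (nhds m) := by
  obtain ⟨mem, anti⟩ := picardMann_mem_and_antitone hφ hT hφT hα hf0 hf
  have hbdd_iterates : BddBelow (Set.range fun n => φ (f n)) :=
    hbdd.mono (Set.range_subset_iff.2 fun n => Set.mem_image_of_mem φ (mem n))
  exact ⟨_, tendsto_atTop_ciInf anti hbdd_iterates⟩

/-- The limit lim_{n→∞} ρ(f_n − w) exists. -/
theorem stmt_2
    {V : Type*} [AddCommGroup V] [Module ℝ V]
    (ρ : V → ℝ)
    (hnonneg : ∀ f : V, 0 ≤ ρ f)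
    (heven : ∀ f : V, ρ (-f) = ρ f)
    (hconv : ∀ f g : V, ∀ α β : ℝ, 0 ≤ α → 0 ≤ β → α + β = 1 →
      ρ (α • f + β • g) ≤ α * ρ f + β * ρ g)
    (D : Set V) (hDne : D.Nonempty) (hDconv : Convex ℝ D)
    (T : V → V) (hTmaps : ∀ f ∈ D, T f ∈ D)
    (lam : ℝ) (hlam : lam ∈ Set.Ioo (0 : ℝ) 1)
    (hfirm : ∀ f ∈ D, ∀ g ∈ D,
      ρ (T f - T g) ≤ ρ ((1 - lam) • (f - g) + lam • (T f - T g)))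
    (w : V) (hwD : w ∈ D) (hw : T w = w)
    (α : ℕ → ℝ) (hα : ∀ n, α n ∈ Set.Ioo (0 : ℝ) 1)
    (f g : ℕ → V) (hf0 : f 0 ∈ D)
    (hg : ∀ n, g n = (1 - α n) • f n + (α n) • T (f n))
    (hfrec : ∀ n, f (n + 1) = T (g n)) :
    ∃ m : ℝ, Tendsto (fun n => ρ (f n - w)) atTop (nhds m) := by
  have hρ : ConvexOn ℝ Set.univ ρ := ⟨convex_univ, fun x _ y _ a b => hconv x y a b⟩
  have hT : FirmlyNonexpansiveOn lam ρ T D := hfirm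
  have map_sub_le (x : V) (hx : x ∈ D) : ρ (T x - w) ≤ ρ (x - w) := by
    simpa only [hw] using hT.map_sub_map_le hρ (Set.Ioo_subset_Ico_self hlam) hx hwD
  exact stmt_2_general (quasiconvexOn_comp_sub_right hρ hDconv w)
    ⟨0, Set.forall_mem_image.2 fun x _ => hnonneg (x - w)⟩ hTmaps map_sub_le
    (fun n => Set.Ioo_subset_Icc_self (hα n)) hf0
    (fun n => by rw [hfrec, hg, picardMannStep])
end

section
/- Let T : D → D be a (λ,ρ)-firmly nonexpansive mapping for some λ ∈ (0,1), let w ∈ D be a fixed point of T, and let (f_n), (g_n) be generated by the iterative process g_n = (1−α_n) f_n + α_n T f_n, f_{n+1} = T g_n with (α_n) ⊂ (0,1) and f_1 ∈ D. Then lim_{n→∞} ρ(g_n − w) exists and equals lim_{n→∞} ρ(f_n − w). -/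
open Filter

/-!
Convexity of `ρ` absorbs the term `lam * ρ (T x - w)` of firm nonexpansiveness, so `T` does not
increase `ρ (· - w)` on `D`. Hence `T` maps every sublevel set of `ρ (· - w)` in `D` into itself,
and since these sets are convex, `ρ (f (n + 1) - w) ≤ ρ (g n - w) ≤ ρ (f n - w)`: the two sequences
interlace, decrease, and share their limit.
-/

theorem exists_tendsto_of_interlacing {β : Type*} [ConditionallyCompleteLinearOrder β]
    [TopologicalSpace β] [OrderTopology β] {a b : ℕ → β} (ha : BddBelow (Set.range a))
    (hba : ∀ n, b n ≤ a n) (hab : ∀ n, a (n + 1) ≤ b n) :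
    ∃ m, Tendsto a atTop (nhds m) ∧ Tendsto b atTop (nhds m) := by
  have a_antitone : Antitone a := antitone_nat_of_succ_le fun n => (hab n).trans (hba n)
  have a_tendsto := tendsto_atTop_ciInf a_antitone ha
  exact ⟨_, a_tendsto, tendsto_of_tendsto_of_tendsto_of_le_of_le
    ((tendsto_add_atTop_iff_nat 1).2 a_tendsto) a_tendsto hab hba⟩

section

variable {V : Type*} [AddCommGroup V] [Module ℝ V]

/-- The Picard–Mann hybrid iteration of `T` with step sizes `α`: a Mann step from `f n` to `g n`,
followed by a Picard step from `g n` to `f (n + 1)`. Indices start at `0`. -/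
structure IsPicardMannIteration_s3 (T : V → V) (α : ℕ → ℝ) (f g : ℕ → V) : Prop where
  mann_step : ∀ n, g n = (1 - α n) • f n + α n • T (f n)
  picard_step : ∀ n, f (n + 1) = T (g n)

/-- `(lam, ρ)`-firm nonexpansiveness of `T` on `D`, tested only on pairs `(x, w)` and with `w` in
place of `T w`; at a fixed point `w ∈ D` it is implied by firm nonexpansiveness on `D`. -/
def IsFirmlyQuasiNonexpansiveOn (ρ : V → ℝ) (lam : ℝ) (T : V → V) (D : Set V) (w : V) : Prop :=
  ∀ x ∈ D, ρ (T x - w) ≤ ρ ((1 - lam) • (x - w) + lam • (T x - w))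

theorem IsFirmlyQuasiNonexpansiveOn.map_sub_le {ρ : V → ℝ} {lam : ℝ} {T : V → V} {D : Set V}
    {w x : V} (hT : IsFirmlyQuasiNonexpansiveOn ρ lam T D w) (hρ : ConvexOn ℝ Set.univ ρ)
    (hlam : lam ∈ Set.Ico (0 : ℝ) 1) (hx : x ∈ D) : ρ (T x - w) ≤ ρ (x - w) := by
  have one_sub_pos : 0 < 1 - lam := sub_pos.2 hlam.2
  have firm_convex : ρ (T x - w) ≤ (1 - lam) * ρ (x - w) + lam * ρ (T x - w) :=
    (hT x hx).trans <|
      hρ.2 (Set.mem_univ _) (Set.mem_univ _) one_sub_pos.le hlam.1 (sub_add_cancel 1 lam)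
  exact le_of_mul_le_mul_left (by linarith) one_sub_pos

theorem convexOn_comp_sub_right {ρ : V → ℝ} (hρ : ConvexOn ℝ Set.univ ρ) (w : V) :
    ConvexOn ℝ Set.univ fun x => ρ (x - w) := by
  simpa only [Set.preimage_univ, Function.comp_def, ← sub_eq_add_neg] using hρ.translate_left (-w)

namespace IsPicardMannIteration_s3

variable {T : V → V} {α : ℕ → ℝ} {f g : ℕ → V} {D : Set V}

theorem mann_mem (h : IsPicardMannIteration_s3 T α f g) (hD : Convex ℝ D) (hTD : Set.MapsTo T D D)
    {n : ℕ} (hα : α n ∈ Set.Icc (0 : ℝ) 1) (hf : f n ∈ D) : g n ∈ D := by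
  rw [h.mann_step]
  exact hD hf (hTD hf) (sub_nonneg.2 hα.2) hα.1 (sub_add_cancel 1 (α n))

theorem picard_mem_s3 (h : IsPicardMannIteration_s3 T α f g) (hD : Convex ℝ D) (hTD : Set.MapsTo T D D)
    (hα : ∀ n, α n ∈ Set.Icc (0 : ℝ) 1) (hf0 : f 0 ∈ D) (n : ℕ) : f n ∈ D := by
  induction n with
  | zero => exact hf0
  | succ n ih =>
    rw [h.picard_step]
    exact hTD (h.mann_mem hD hTD (hα n) ih)

theorem mann_le {β : Type*} [Preorder β] {φ : V → β} (h : IsPicardMannIteration_s3 T α f g)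
    (hφ : QuasiconvexOn ℝ D φ) (hTD : Set.MapsTo T D D) (hTφ : ∀ x ∈ D, φ (T x) ≤ φ x)
    {n : ℕ} (hα : α n ∈ Set.Icc (0 : ℝ) 1) (hf : f n ∈ D) : φ (g n) ≤ φ (f n) := by
  have sublevel_invariant :
      Set.MapsTo T {x ∈ D | φ x ≤ φ (f n)} {x ∈ D | φ x ≤ φ (f n)} :=
    fun x hx => ⟨hTD hx.1, (hTφ x hx.1).trans hx.2⟩
  exact (h.mann_mem (hφ (φ (f n))) sublevel_invariant hα ⟨hf, le_rfl⟩).2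

theorem exists_tendsto {β : Type*} [ConditionallyCompleteLinearOrder β] [TopologicalSpace β]
    [OrderTopology β] {φ : V → β} (h : IsPicardMannIteration_s3 T α f g) (hD : Convex ℝ D)
    (hφ : QuasiconvexOn ℝ D φ) (hφD : BddBelow (φ '' D)) (hTD : Set.MapsTo T D D)
    (hTφ : ∀ x ∈ D, φ (T x) ≤ φ x) (hα : ∀ n, α n ∈ Set.Icc (0 : ℝ) 1) (hf0 : f 0 ∈ D) :
    ∃ m, Tendsto (fun n => φ (f n)) atTop (nhds m) ∧ Tendsto (fun n => φ (g n)) atTop (nhds m) := by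
  have f_mem : ∀ n, f n ∈ D := h.picard_mem_s3 hD hTD hα hf0
  refine exists_tendsto_of_interlacing (hφD.mono ?_) (fun n => ?_) (fun n => ?_)
  · exact Set.range_subset_iff.2 fun n => Set.mem_image_of_mem φ (f_mem n)
  · exact h.mann_le hφ hTD hTφ (hα n) (f_mem n)
  · rw [h.picard_step]
    exact hTφ _ (h.mann_mem hD hTD (hα n) (f_mem n))

end IsPicardMannIteration_s3

theorem stmt_3_general {ρ : V → ℝ} (hρ : ConvexOn ℝ Set.univ ρ) (hbdd : BddBelow (Set.range ρ))
    {D : Set V} (hD : Convex ℝ D) {T : V → V} (hTD : Set.MapsTo T D D) {lam : ℝ}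
    (hlam : lam ∈ Set.Ico (0 : ℝ) 1) {w : V} (hT : IsFirmlyQuasiNonexpansiveOn ρ lam T D w)
    {α : ℕ → ℝ} (hα : ∀ n, α n ∈ Set.Icc (0 : ℝ) 1) {f g : ℕ → V} (hf0 : f 0 ∈ D)
    (h : IsPicardMannIteration_s3 T α f g) :
    ∃ m : ℝ, Tendsto (fun n => ρ (f n - w)) atTop (nhds m) ∧
      Tendsto (fun n => ρ (g n - w)) atTop (nhds m) := by
  have dist_convex : ConvexOn ℝ D fun x => ρ (x - w) :=
    (convexOn_comp_sub_right hρ w).subset (Set.subset_univ D) hD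
  have dist_bddBelow : BddBelow ((fun x => ρ (x - w)) '' D) :=
    hbdd.mono (Set.image_subset_iff.2 fun x _ => Set.mem_range_self (x - w))
  exact h.exists_tendsto hD dist_convex.quasiconvexOn dist_bddBelow hTD
    (fun _ hx => hT.map_sub_le hρ hlam hx) hα hf0

end

/-- lim ρ(g_n − w) exists and equals lim ρ(f_n − w). -/
theorem stmt_3
    {V : Type*} [AddCommGroup V] [Module ℝ V]
    (ρ : V → ℝ)
    (hnonneg : ∀ f : V, 0 ≤ ρ f)
    (heven : ∀ f : V, ρ (-f) = ρ f)
    (hconv : ∀ f g : V, ∀ α β : ℝ, 0 ≤ α → 0 ≤ β → α + β = 1 →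
      ρ (α • f + β • g) ≤ α * ρ f + β * ρ g)
    (D : Set V) (hDne : D.Nonempty) (hDconv : Convex ℝ D)
    (T : V → V) (hTmaps : ∀ f ∈ D, T f ∈ D)
    (lam : ℝ) (hlam : lam ∈ Set.Ioo (0 : ℝ) 1)
    (hfirm : ∀ f ∈ D, ∀ g ∈ D,
      ρ (T f - T g) ≤ ρ ((1 - lam) • (f - g) + lam • (T f - T g)))
    (w : V) (hwD : w ∈ D) (hw : T w = w)
    (α : ℕ → ℝ) (hα : ∀ n, α n ∈ Set.Ioo (0 : ℝ) 1)
    (f g : ℕ → V) (hf0 : f 0 ∈ D)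
    (hg : ∀ n, g n = (1 - α n) • f n + (α n) • T (f n))
    (hfrec : ∀ n, f (n + 1) = T (g n)) :
    ∃ m : ℝ, Tendsto (fun n => ρ (f n - w)) atTop (nhds m) ∧
      Tendsto (fun n => ρ (g n - w)) atTop (nhds m) := by
  have hT : IsFirmlyQuasiNonexpansiveOn ρ lam T D w := fun x hx => by
    simpa only [hw] using hfirm x hx w hwD
  exact stmt_3_general ⟨convex_univ, fun x _ y _ a b => hconv x y a b⟩
    ⟨0, Set.forall_mem_range.2 hnonneg⟩ hDconv hTmaps (Set.Ioo_subset_Ico_self hlam) hT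
    (fun n => Set.Ioo_subset_Icc_self (hα n)) hf0 ⟨hg, hfrec⟩
end

section
/- Let T : D → D have a nonempty fixed point set F and satisfy condition (I) with respect to a nondecreasing function ℓ : [0,∞) → [0,∞) with ℓ(0) = 0 and ℓ(r) > 0 for r > 0. Let (f_n) ⊂ D be a sequence such that ρ(f_{n+1} − w) ≤ ρ(f_n − w) for every w ∈ F and every n, and such that ρ(f_n − T f_n) → 0. Then lim_{n→∞} dist_ρ(f_n, F) = 0. -/
open Filter

/-- The ρ-distance from a point to a set: dist_ρ(f, A) = inf {ρ(f − h) : h ∈ A}. -/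
noncomputable def distRho {V : Type*} [AddCommGroup V] [Module ℝ V]
    (ρ : V → ℝ) (f : V) (A : Set V) : ℝ :=
  sInf ((fun h => ρ (f - h)) '' A)

section Order

variable {ι R S : Type*} {l : Filter ι}
  [LinearOrder R] [Zero R] [TopologicalSpace R] [OrderTopology R]
  [LinearOrder S] [Zero S] [TopologicalSpace S] [OrderClosedTopology S]

theorem tendsto_zero_of_monotoneOn_comp_le {ℓ : R → S} (hℓmono : MonotoneOn ℓ (Set.Ici 0))
    (hℓpos : ∀ x, 0 < x → 0 < ℓ x) {d : ι → R} {r : ι → S} (hd : ∀ᶠ i in l, 0 ≤ d i)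
    (hle : ∀ᶠ i in l, ℓ (d i) ≤ r i) (hr : Tendsto r l (nhds 0)) :
    Tendsto d l (nhds 0) := by
  refine tendsto_order.2 ⟨fun a ha => hd.mono fun _ hi => ha.trans_le hi, fun ε hε => ?_⟩
  have hr_lt : ∀ᶠ i in l, r i < ℓ ε := hr.eventually_lt_const (hℓpos ε hε)
  filter_upwards [hd, hle, hr_lt] with i hdi hlei hri
  exact hℓmono.reflect_lt hdi hε.le (hlei.trans_lt hri)

end Order

section Modular

variable {V : Type*} [AddCommGroup V] [Module ℝ V] {ρ : V → ℝ}

theorem le_distRho {A : Set V} (hA : A.Nonempty) {f : V} {c : ℝ}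
    (h : ∀ a ∈ A, c ≤ ρ (f - a)) : c ≤ distRho ρ f A :=
  le_csInf (hA.image _) (Set.forall_mem_image.2 h)

theorem stmt_7_general (hρ : ∀ f, 0 ≤ ρ f) {D : Set V} {T : V → V}
    (hfix : (D ∩ Function.fixedPoints T).Nonempty)
    {ℓ : ℝ → ℝ} (hℓmono : MonotoneOn ℓ (Set.Ici 0)) (hℓpos : ∀ r, 0 < r → 0 < ℓ r)
    (hcondI : ∀ f ∈ D, ℓ (distRho ρ f (D ∩ Function.fixedPoints T)) ≤ ρ (f - T f))
    {ι : Type*} {l : Filter ι} {f : ι → V} (hfD : ∀ᶠ i in l, f i ∈ D)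
    (hTf : Tendsto (fun i => ρ (f i - T (f i))) l (nhds 0)) :
    Tendsto (fun i => distRho ρ (f i) (D ∩ Function.fixedPoints T)) l (nhds 0) :=
  tendsto_zero_of_monotoneOn_comp_le hℓmono hℓpos
    (.of_forall fun _ => le_distRho hfix fun _ _ => hρ _)
    (hfD.mono fun i hi => hcondI (f i) hi) hTf

end Modular

/-- Under condition (I) and Fejér monotonicity with ρ(f_n − T f_n) → 0,
one has dist_ρ(f_n, F) → 0. -/
theorem stmt_7
    {V : Type*} [AddCommGroup V] [Module ℝ V]
    (ρ : V → ℝ)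
    (hnonneg : ∀ f : V, 0 ≤ ρ f)
    (heven : ∀ f : V, ρ (-f) = ρ f)
    (hconv : ∀ f g : V, ∀ α β : ℝ, 0 ≤ α → 0 ≤ β → α + β = 1 →
      ρ (α • f + β • g) ≤ α * ρ f + β * ρ g)
    (D : Set V) (hDne : D.Nonempty) (hDconv : Convex ℝ D)
    (T : V → V) (hTmaps : ∀ f ∈ D, T f ∈ D)
    (F : Set V) (hF : F = {f | f ∈ D ∧ T f = f}) (hFne : F.Nonempty)
    (ℓ : ℝ → ℝ) (hℓmono : MonotoneOn ℓ (Set.Ici 0)) (hℓ0 : ℓ 0 = 0)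
    (hℓpos : ∀ r : ℝ, 0 < r → 0 < ℓ r)
    (hcondI : ∀ f ∈ D, ℓ (distRho ρ f F) ≤ ρ (f - T f))
    (f : ℕ → V) (hfD : ∀ n, f n ∈ D)
    (hmono : ∀ w ∈ F, ∀ n, ρ (f (n + 1) - w) ≤ ρ (f n - w))
    (hTf : Tendsto (fun n => ρ (f n - T (f n))) atTop (nhds 0)) :
    Tendsto (fun n => distRho ρ (f n) F) atTop (nhds 0) := by
  subst hF
  exact stmt_7_general hnonneg hFne hℓmono hℓpos hcondI (.of_forall hfD) hTf
end

section
/- Let F ⊆ D be nonempty and let (f_n) ⊂ D be a sequence such that ρ(f_{n+1} − w) ≤ ρ(f_n − w) for every w ∈ F and every n, and such that dist_ρ(f_n, F) → 0. Then for every ε > 0 there exists n_0 such that ρ((f_{n+m} − f_n)/2) < ε for all n ≥ n_0 and all m ≥ 0. -/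
open Filter

theorem exists_mem_lt_of_distRho_lt {V : Type*} [AddCommGroup V] [Module ℝ V]
    {ρ : V → ℝ} {x : V} {A : Set V} {ε : ℝ} (hA : A.Nonempty) (hx : distRho ρ x A < ε) :
    ∃ w ∈ A, ρ (x - w) < ε :=
  Set.exists_mem_image.mp (exists_lt_of_csInf_lt (hA.image _) hx)

theorem half_smul_sub_lt_of_even_of_quasiconvexOn {𝕜 V β : Type*}
    [Field 𝕜] [LinearOrder 𝕜] [IsStrictOrderedRing 𝕜] [AddCommGroup V] [Module 𝕜 V]
    [LinearOrder β] {ρ : V → β} (heven : ρ.Even) (hquasi : QuasiconvexOn 𝕜 Set.univ ρ)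
    {x y w : V} {ε : β} (hx : ρ (x - w) < ε) (hy : ρ (y - w) < ε) :
    ρ ((2⁻¹ : 𝕜) • (x - y)) < ε := by
  have hy' : ρ (w - y) < ε := by rwa [← neg_sub, heven]
  have hmid : midpoint 𝕜 (x - w) (w - y) = (2⁻¹ : 𝕜) • (x - y) := by
    rw [midpoint_eq_smul_add, invOf_eq_inv, sub_add_sub_cancel]
  rw [← hmid]
  exact ((hquasi.convex_lt ε).midpoint_mem ⟨Set.mem_univ _, hx⟩ ⟨Set.mem_univ _, hy'⟩).2

theorem stmt_8_general {V ι : Type*} [AddCommGroup V] [Module ℝ V] [Preorder ι]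
    {ρ : V → ℝ} (heven : ρ.Even) (hquasi : QuasiconvexOn ℝ Set.univ ρ)
    {F : Set V} (hFne : F.Nonempty) {f : ι → V}
    (hanti : ∀ w ∈ F, Antitone fun i => ρ (f i - w))
    (hdist : ∀ ε > 0, ∃ i, distRho ρ (f i) F < ε) :
    ∀ ε > 0, ∃ i₀, ∀ i ≥ i₀, ∀ j ≥ i₀, ρ ((2⁻¹ : ℝ) • (f j - f i)) < ε := by
  intro ε hε
  obtain ⟨i₀, hi₀⟩ := hdist ε hε
  obtain ⟨w, hwF, hw⟩ := exists_mem_lt_of_distRho_lt hFne hi₀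
  have hlt (i : ι) (hi : i₀ ≤ i) : ρ (f i - w) < ε := (hanti w hwF hi).trans_lt hw
  exact ⟨i₀, fun i hi j hj =>
    half_smul_sub_lt_of_even_of_quasiconvexOn heven hquasi (hlt j hj) (hlt i hi)⟩

/-- Fejér monotone sequences with dist_ρ(f_n, F) → 0 are "half-Cauchy":
for every ε > 0 there is n₀ with ρ((f_{n+m} − f_n)/2) < ε for all n ≥ n₀, m ≥ 0. -/
theorem stmt_8
    {V : Type*} [AddCommGroup V] [Module ℝ V]
    (ρ : V → ℝ)
    (hnonneg : ∀ f : V, 0 ≤ ρ f)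
    (heven : ∀ f : V, ρ (-f) = ρ f)
    (hconv : ∀ f g : V, ∀ α β : ℝ, 0 ≤ α → 0 ≤ β → α + β = 1 →
      ρ (α • f + β • g) ≤ α * ρ f + β * ρ g)
    (D : Set V) (hDne : D.Nonempty)
    (F : Set V) (hFD : F ⊆ D) (hFne : F.Nonempty)
    (f : ℕ → V) (hfD : ∀ n, f n ∈ D)
    (hmono : ∀ w ∈ F, ∀ n, ρ (f (n + 1) - w) ≤ ρ (f n - w))
    (hdist : Tendsto (fun n => distRho ρ (f n) F) atTop (nhds 0)) :
    ∀ ε : ℝ, 0 < ε → ∃ n₀ : ℕ, ∀ n ≥ n₀, ∀ m : ℕ,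
      ρ ((2⁻¹ : ℝ) • (f (n + m) - f n)) < ε := by
  have hconvex : ConvexOn ℝ Set.univ ρ := ⟨convex_univ, fun x _ y _ a b => hconv x y a b⟩
  exact fun ε hε => (stmt_8_general heven hconvex.quasiconvexOn hFne
    (fun w hw => antitone_nat_of_succ_le (hmono w hw))
    (fun δ hδ => (hdist.eventually_lt_const hδ).exists) ε hε).imp
    fun n₀ hn₀ n hn m => hn₀ n hn (n + m) (Nat.le_add_right_of_le hn)
end
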